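/- Let B be a nontrivial MV-algebra, A a semisimple MV-algebra, and φ: A → S(B) a homomorphism. Let A' := {(b,a) ∈ B×A : η_B(b) = φ(a)}, a subalgebra of B×A (the pullback of η_B along φ). Then Rad(A') = {(b,0) : b ∈ Rad(B)}, and the map A'/Rad(A') → A sending the class of (b,a) to a is a well-defined isomorphism of MV-algebras. (Hence the counit of the induced adjunction between the slice categories is an isomorphism, i.e. the reflection of semisimple MV-algebras is admissible for categorical Galois theory.) -/

import Mathlib

namespace MVPaper

/-- An MV-algebra: a set with a binary `⊕`, a unary `¬`, and a constant `0`
satisfying the MV-algebra axioms. -/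
class MV (α : Type*) where
  oplus : α → α → α
  neg : α → α
  zero : α
  oplus_assoc : ∀ x y z : α, oplus x (oplus y z) = oplus (oplus x y) z
  oplus_comm : ∀ x y : α, oplus x y = oplus y x
  oplus_zero : ∀ x : α, oplus x zero = x
  neg_neg : ∀ x : α, neg (neg x) = x
  oplus_neg_zero : ∀ x : α, oplus x (neg zero) = neg zero
  lukasiewicz : ∀ x y : α,
    oplus (neg (oplus (neg x) y)) y = oplus (neg (oplus (neg y) x)) x

namespace MV

variable {α : Type*} [MV α]

/-- `1 := ¬0`. -/
def one : α := neg zero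

/-- `x ⊙ y := ¬(¬x ⊕ ¬y)`. -/
def odot (x y : α) : α := neg (oplus (neg x) (neg y))

/-- `x ⊖ y := ¬(¬x ⊕ y)`. -/
def ominus (x y : α) : α := neg (oplus (neg x) y)

/-- `d(x,y) := (x ⊖ y) ⊕ (y ⊖ x)`. -/
def dist (x y : α) : α := oplus (ominus x y) (ominus y x)

/-- The natural order: `x ≤ y` iff `¬x ⊕ y = 1`. -/
def le (x y : α) : Prop := oplus (neg x) y = one

/-- `x ∨ y := (x ⊖ y) ⊕ y`. -/
def sup (x y : α) : α := oplus (ominus x y) y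

/-- `x ∧ y := x ⊙ (¬x ⊕ y)`. -/
def inf (x y : α) : α := odot x (oplus (neg x) y)

/-- `n · a`, the `n`-fold sum `a ⊕ ⋯ ⊕ a`. -/
def nsmul : ℕ → α → α
  | 0, _ => zero
  | n + 1, a => oplus a (nsmul n a)

end MV

/-- Products of MV-algebras, with componentwise operations. -/
instance prodMV {α β : Type*} [MV α] [MV β] : MV (α × β) where
  oplus x y := (MV.oplus x.1 y.1, MV.oplus x.2 y.2)
  neg x := (MV.neg x.1, MV.neg x.2)
  zero := (MV.zero, MV.zero)
  oplus_assoc x y z :=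
    congrArg₂ Prod.mk (MV.oplus_assoc _ _ _) (MV.oplus_assoc _ _ _)
  oplus_comm x y :=
    congrArg₂ Prod.mk (MV.oplus_comm _ _) (MV.oplus_comm _ _)
  oplus_zero x := by
    obtain ⟨a, b⟩ := x
    exact congrArg₂ Prod.mk (MV.oplus_zero a) (MV.oplus_zero b)
  neg_neg x := by
    obtain ⟨a, b⟩ := x
    exact congrArg₂ Prod.mk (MV.neg_neg a) (MV.neg_neg b)
  oplus_neg_zero x :=
    congrArg₂ Prod.mk (MV.oplus_neg_zero _) (MV.oplus_neg_zero _)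
  lukasiewicz x y :=
    congrArg₂ Prod.mk (MV.lukasiewicz _ _) (MV.lukasiewicz _ _)

/-- A homomorphism of MV-algebras: a map preserving `⊕`, `¬` and `0`. -/
structure IsHom {α β : Type*} [MV α] [MV β] (f : α → β) : Prop where
  map_zero : f MV.zero = MV.zero
  map_oplus : ∀ x y : α, f (MV.oplus x y) = MV.oplus (f x) (f y)
  map_neg : ∀ x : α, f (MV.neg x) = MV.neg (f x)

/-- An ideal of an MV-algebra: contains `0`, closed under `⊕`, downward closed. -/
structure IsIdeal {α : Type*} [MV α] (I : Set α) : Prop where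
  zero_mem : MV.zero ∈ I
  oplus_mem : ∀ ⦃x⦄, x ∈ I → ∀ ⦃y⦄, y ∈ I → MV.oplus x y ∈ I
  lower_mem : ∀ ⦃x⦄, x ∈ I → ∀ ⦃y⦄, MV.le y x → y ∈ I

/-- The kernel of a homomorphism. -/
def ker {α β : Type*} [MV α] [MV β] (f : α → β) : Set α := {x | f x = MV.zero}

/-- The radical of an MV-algebra: `Rad(A) = {a | n·a ≤ ¬a for all n}`
(the intersection of all maximal proper ideals). -/
def Rad (α : Type*) [MV α] : Set α :=
  {a | ∀ n : ℕ, MV.le (MV.nsmul n a) (MV.neg a)}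

/-- `P(A) := Rad(A) ∪ ¬Rad(A)`. -/
def PSet (α : Type*) [MV α] : Set α :=
  Rad α ∪ {x | MV.neg x ∈ Rad α}

/-- An MV-algebra is trivial if `0 = 1`. -/
def IsTrivial (α : Type*) [MV α] : Prop := (MV.zero : α) = MV.one

/-- An MV-algebra is semisimple if its radical is trivial. -/
def Semisimple (α : Type*) [MV α] : Prop := Rad α = ({MV.zero} : Set α)

/-- An MV-algebra is perfect if `A = Rad(A) ∪ ¬Rad(A)`. -/
def Perfect (α : Type*) [MV α] : Prop := ∀ a : α, a ∈ PSet α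

/-- `q : α → Q` realizes `Q` as the quotient of `α` by the ideal `I`,
i.e. by the congruence `x ∼ y ↔ d(x,y) ∈ I`. -/
structure IsQuotientBy {α Q : Type*} [MV α] [MV Q] (I : Set α) (q : α → Q) : Prop where
  hom : IsHom q
  surj : Function.Surjective q
  eq_iff : ∀ x y : α, q x = q y ↔ MV.dist x y ∈ I

/-!
The radical is cut out by equations, so it is computed componentwise in products and restricts to
subalgebras. Hence, for semisimple `A`, the radical of the pullback `A'` consists of the pairs
`(b, 0)` in `A'` with `b ∈ Rad B`. Since `η_B b = φ 0 = 0` already forces `b ∈ Rad B`, this is the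
kernel of the projection `A' → A`. This projection is surjective because `η_B` is, and a surjective
homomorphism exhibits its codomain as the quotient by its kernel.
-/

namespace MV

variable {α : Type*} [MV α]

theorem zero_oplus (x : α) : oplus zero x = x := by
  rw [oplus_comm, oplus_zero]

theorem one_oplus (x : α) : oplus one x = one := by
  rw [one, oplus_comm, oplus_neg_zero]

theorem neg_one : neg (one : α) = zero :=
  neg_neg zero

theorem neg_oplus_self (x : α) : oplus (neg x) x = one := by
  have h := lukasiewicz one x
  rwa [neg_one, zero_oplus, one, oplus_neg_zero] at h

theorem eq_zero_of_oplus_eq_zero {x y : α} (h : oplus x y = zero) : x = zero := by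
  have hneg : neg x = one :=
    calc
      neg x = oplus (neg x) (oplus x y) := by rw [h, oplus_zero]
      _ = oplus one y := by rw [oplus_assoc, neg_oplus_self]
      _ = one := one_oplus y
  rw [← neg_neg x, hneg, neg_one]

theorem oplus_eq_zero_iff {x y : α} : oplus x y = zero ↔ x = zero ∧ y = zero := by
  refine ⟨fun h => ⟨eq_zero_of_oplus_eq_zero h, ?_⟩, ?_⟩
  · exact eq_zero_of_oplus_eq_zero ((oplus_comm y x).trans h)
  · rintro ⟨rfl, rfl⟩
    exact oplus_zero zero

theorem ominus_self (x : α) : ominus x x = zero := by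
  rw [ominus, neg_oplus_self, neg_one]

theorem ominus_zero (x : α) : ominus x zero = x := by
  rw [ominus, oplus_zero, neg_neg]

theorem zero_ominus (x : α) : ominus zero x = zero := by
  rw [ominus, ← one, one_oplus, neg_one]

theorem sup_comm (x y : α) : sup x y = sup y x :=
  lukasiewicz x y

theorem sup_eq_right_of_ominus_eq_zero {x y : α} (h : ominus x y = zero) : sup x y = y := by
  rw [sup, h, zero_oplus]

theorem dist_zero (x : α) : dist x zero = x := by
  rw [dist, ominus_zero, zero_ominus, oplus_zero]

theorem dist_eq_zero_iff {x y : α} : dist x y = zero ↔ x = y := by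
  rw [dist, oplus_eq_zero_iff]
  constructor
  · rintro ⟨hxy, hyx⟩
    rw [← sup_eq_right_of_ominus_eq_zero hyx, sup_comm, sup_eq_right_of_ominus_eq_zero hxy]
  · rintro rfl
    exact ⟨ominus_self x, ominus_self x⟩

end MV

namespace IsHom

variable {α β : Type*} [MV α] [MV β]

theorem fst : IsHom (Prod.fst : α × β → α) :=
  ⟨rfl, fun _ _ => rfl, fun _ => rfl⟩

theorem snd : IsHom (Prod.snd : α × β → β) :=
  ⟨rfl, fun _ _ => rfl, fun _ => rfl⟩

variable {f : α → β}

theorem map_one (hf : IsHom f) : f MV.one = MV.one := by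
  rw [MV.one, hf.map_neg, hf.map_zero, MV.one]

theorem map_dist (hf : IsHom f) (x y : α) : f (MV.dist x y) = MV.dist (f x) (f y) := by
  simp only [MV.dist, MV.ominus, hf.map_oplus, hf.map_neg]

theorem map_nsmul (hf : IsHom f) (n : ℕ) (x : α) : f (MV.nsmul n x) = MV.nsmul n (f x) := by
  induction n with
  | zero => exact hf.map_zero
  | succ n ih => rw [MV.nsmul, MV.nsmul, hf.map_oplus, ih]

theorem map_le_map_iff (hf : IsHom f) (hinj : Function.Injective f) {x y : α} :
    MV.le (f x) (f y) ↔ MV.le x y := by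
  rw [MV.le, MV.le, ← hf.map_neg, ← hf.map_oplus, ← hf.map_one, hinj.eq_iff]

theorem map_mem_rad_iff (hf : IsHom f) (hinj : Function.Injective f) {x : α} :
    f x ∈ Rad β ↔ x ∈ Rad α :=
  forall_congr' fun n => by
    rw [← hf.map_nsmul, ← hf.map_neg, hf.map_le_map_iff hinj]

theorem isQuotientBy_ker (hf : IsHom f) (hsurj : Function.Surjective f) :
    IsQuotientBy (ker f) f where
  hom := hf
  surj := hsurj
  eq_iff x y := by rw [ker, Set.mem_ofPred_eq, hf.map_dist, MV.dist_eq_zero_iff]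

end IsHom

theorem IsQuotientBy.map_eq_zero_iff {α Q : Type*} [MV α] [MV Q] {I : Set α} {q : α → Q}
    (hq : IsQuotientBy I q) {x : α} : q x = MV.zero ↔ x ∈ I := by
  rw [← hq.hom.map_zero, hq.eq_iff, MV.dist_zero]

theorem Semisimple.mem_rad_iff {α : Type*} [MV α] (hα : Semisimple α) {a : α} :
    a ∈ Rad α ↔ a = MV.zero := by
  rw [hα, Set.mem_singleton_iff]

theorem MV.le_prod_iff {α β : Type*} [MV α] [MV β] {p q : α × β} :
    MV.le p q ↔ MV.le p.1 q.1 ∧ MV.le p.2 q.2 :=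
  Prod.ext_iff

theorem mem_rad_prod_iff {α β : Type*} [MV α] [MV β] {p : α × β} :
    p ∈ Rad (α × β) ↔ p.1 ∈ Rad α ∧ p.2 ∈ Rad β := by
  simp only [Rad, Set.mem_ofPred_eq, MV.le_prod_iff, IsHom.fst.map_nsmul, IsHom.snd.map_nsmul,
    IsHom.fst.map_neg, IsHom.snd.map_neg, forall_and]

/-- A subalgebra of an MV-algebra: a subset closed under `0`, `⊕` and `¬`. Its type of elements
carries the restricted operations. -/
structure MVSubalgebra (α : Type*) [MV α] where
  carrier : Set α
  zero_mem : MV.zero ∈ carrier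
  oplus_mem : ∀ {x y}, x ∈ carrier → y ∈ carrier → MV.oplus x y ∈ carrier
  neg_mem : ∀ {x}, x ∈ carrier → MV.neg x ∈ carrier

namespace MVSubalgebra

variable {α : Type*} [MV α]

instance : CoeSort (MVSubalgebra α) (Type _) where
  coe S := S.carrier

instance (S : MVSubalgebra α) : MV S where
  oplus x y := ⟨MV.oplus x.1 y.1, S.oplus_mem x.2 y.2⟩
  neg x := ⟨MV.neg x.1, S.neg_mem x.2⟩
  zero := ⟨MV.zero, S.zero_mem⟩
  oplus_assoc _ _ _ := Subtype.ext (MV.oplus_assoc _ _ _)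
  oplus_comm _ _ := Subtype.ext (MV.oplus_comm _ _)
  oplus_zero _ := Subtype.ext (MV.oplus_zero _)
  neg_neg _ := Subtype.ext (MV.neg_neg _)
  oplus_neg_zero _ := Subtype.ext (MV.oplus_neg_zero _)
  lukasiewicz _ _ := Subtype.ext (MV.lukasiewicz _ _)

theorem isHom_val (S : MVSubalgebra α) : IsHom (Subtype.val : S → α) :=
  ⟨rfl, fun _ _ => rfl, fun _ => rfl⟩

theorem val_mem_rad_iff {S : MVSubalgebra α} {x : S} : x.1 ∈ Rad α ↔ x ∈ Rad S :=
  S.isHom_val.map_mem_rad_iff Subtype.val_injective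

end MVSubalgebra

section Pullback

variable {α β γ : Type*} [MV α] [MV β] [MV γ] {f : β → γ} {g : α → γ}

/-- The pullback of the homomorphisms `f : β → γ` and `g : α → γ`, as the subalgebra
`{(b, a) | f b = g a}` of `β × α`. -/
def pullback (hf : IsHom f) (hg : IsHom g) : MVSubalgebra (β × α) where
  carrier := {p | f p.1 = g p.2}
  zero_mem := hf.map_zero.trans hg.map_zero.symm
  oplus_mem {x y} hx hy :=
    calc
      f (MV.oplus x.1 y.1) = MV.oplus (f x.1) (f y.1) := hf.map_oplus _ _
      _ = MV.oplus (g x.2) (g y.2) := congrArg₂ MV.oplus hx hy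
      _ = g (MV.oplus x.2 y.2) := (hg.map_oplus _ _).symm
  neg_mem {x} hx :=
    calc
      f (MV.neg x.1) = MV.neg (f x.1) := hf.map_neg _
      _ = MV.neg (g x.2) := congrArg MV.neg hx
      _ = g (MV.neg x.2) := (hg.map_neg _).symm

namespace pullback

/-- The projection from the pullback `{(b, a) | f b = g a}` to the `a`-component. -/
def snd (hf : IsHom f) (hg : IsHom g) (p : pullback hf hg) : α := p.1.2

theorem isHom_snd (hf : IsHom f) (hg : IsHom g) : IsHom (snd hf hg) :=
  ⟨rfl, fun _ _ => rfl, fun _ => rfl⟩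

theorem snd_surjective (hf : IsHom f) (hg : IsHom g) (hsurj : Function.Surjective f) :
    Function.Surjective (snd hf hg) := fun a =>
  let ⟨b, hb⟩ := hsurj (g a)
  ⟨⟨(b, a), hb⟩, rfl⟩

theorem mem_rad_iff (hf : IsHom f) (hg : IsHom g) (hα : Semisimple α) {p : pullback hf hg} :
    p ∈ Rad (pullback hf hg) ↔ p.1.1 ∈ Rad β ∧ p.1.2 = MV.zero := by
  rw [← MVSubalgebra.val_mem_rad_iff, mem_rad_prod_iff, hα.mem_rad_iff]

theorem mem_carrier_of_fst_mem_of_snd_eq_zero {I : Set β} (hq : IsQuotientBy I f) (hg : IsHom g)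
    {p : β × α} (h₁ : p.1 ∈ I) (h₂ : p.2 = MV.zero) : p ∈ (pullback hq.hom hg).carrier :=
  calc
    f p.1 = MV.zero := hq.map_eq_zero_iff.2 h₁
    _ = g p.2 := by rw [h₂, hg.map_zero]

theorem fst_mem_of_snd_eq_zero {I : Set β} (hq : IsQuotientBy I f) (hg : IsHom g)
    {p : pullback hq.hom hg} (hp : p.1.2 = MV.zero) : p.1.1 ∈ I :=
  hq.map_eq_zero_iff.1 <|
    calc
      f p.1.1 = g p.1.2 := p.2
      _ = MV.zero := by rw [hp, hg.map_zero]

theorem rad_eq_ker_snd (hα : Semisimple α) (hq : IsQuotientBy (Rad β) f) (hg : IsHom g) :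
    Rad (pullback hq.hom hg) = ker (snd hq.hom hg) :=
  Set.ext fun _ => (mem_rad_iff hq.hom hg hα).trans <|
    and_iff_right_of_imp (fst_mem_of_snd_eq_zero hq hg)

theorem isQuotientBy_rad_snd (hα : Semisimple α) (hq : IsQuotientBy (Rad β) f) (hg : IsHom g) :
    IsQuotientBy (Rad (pullback hq.hom hg)) (snd hq.hom hg) := by
  rw [rad_eq_ker_snd hα hq hg]
  exact (isHom_snd hq.hom hg).isQuotientBy_ker (snd_surjective hq.hom hg hq.surj)

end pullback

end Pullback

/-- Admissibility of the semisimple reflection: let `B` be nontrivial, `A`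
semisimple, `φ : A → S(B)` a homomorphism, and let
`A' = {(b,a) ∈ B × A : η_B b = φ a}` be the pullback of `η_B` along `φ`.
Then `Rad(A') = {(b,0) : b ∈ Rad B}`, and the map `A'/Rad(A') → A`,
`[(b,a)] ↦ a`, is a well-defined isomorphism of MV-algebras (stated here as:
`(b,a) ↦ a` identifies elements of `A'` exactly up to `Rad(A')` and is
surjective onto `A`). -/
theorem semisimple_reflection_admissible {α β SB : Type*} [MV α] [MV β] [MV SB]
    (hBnt : ¬ IsTrivial β) (hA : Semisimple α)
    {ηB : β → SB} (hηB : IsQuotientBy (Rad β) ηB)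
    {φ : α → SB} (hφ : IsHom φ) :
    (Rad (β × α) ∩ {p : β × α | ηB p.1 = φ p.2}
        = {p : β × α | p.1 ∈ Rad β ∧ p.2 = MV.zero}) ∧
    (∀ x y : β × α, ηB x.1 = φ x.2 → ηB y.1 = φ y.2 →
        (x.2 = y.2 ↔ MV.dist x y ∈ Rad (β × α))) ∧
    (∀ a : α, ∃ p : β × α, ηB p.1 = φ p.2 ∧ p.2 = a) := by
  have hquot := pullback.isQuotientBy_rad_snd hA hηB hφ
  refine ⟨Set.ext fun p => ?_, fun x y hx hy => ?_, fun a => ?_⟩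
  · rw [Set.mem_inter_iff, mem_rad_prod_iff, hA.mem_rad_iff]
    exact and_iff_left_of_imp fun h =>
      pullback.mem_carrier_of_fst_mem_of_snd_eq_zero hηB hφ h.1 h.2
  · exact (hquot.eq_iff ⟨x, hx⟩ ⟨y, hy⟩).trans MVSubalgebra.val_mem_rad_iff.symm
  · obtain ⟨p, hp⟩ := hquot.surj a
    exact ⟨p.1, p.2, hp⟩

end MVPaper
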